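/- arXiv:1502.06507 — 2 statements merged into one kernel-verified Lean document; each statement's English description precedes it below -/
import Mathlib

section
/- For every real z with -1 < z < 1, the function P₃(z) = 12·Li₃((1+z)/2) − 6·ln((1+z)/2)·Li₂((1+z)/2) − π²·ln((1+z)/2) − 12·ζ(3) satisfies the differential relation d/dz[ (1−z²)·P₃′(z) ] = 6·Li₂((1−z)/2) − 6·ln((1+z)/2); that is, the function z ↦ (1−z²)·P₃′(z) has derivative 6·Li₂((1−z)/2) − 6·ln((1+z)/2) at every such z. -/
open Real

/-- The polylogarithm `Li s x = ∑_{k=1}^∞ x^k / k^s` for real `x` with `|x| < 1`. -/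
noncomputable def Li (s : ℕ) (x : ℝ) : ℝ := ∑' k : ℕ, x ^ (k + 1) / ((k : ℝ) + 1) ^ s

/-- `ζ(3) = ∑_{k=1}^∞ 1/k³`. -/
noncomputable def zeta3 : ℝ := ∑' k : ℕ, 1 / ((k : ℝ) + 1) ^ 3

/-- Termwise differentiation of the polylogarithm series. -/
theorem hasDerivAt_Li_succ (s : ℕ) {x : ℝ} (hx : |x| < 1) (hx0 : x ≠ 0) :
    HasDerivAt (Li (s + 1)) (Li s x / x) x := by
  obtain ⟨r, hxr, hr⟩ := exists_between hx
  have hr0 : 0 < r := (abs_nonneg x).trans_lt hxr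
  have hball : ∀ y, y ∈ Metric.ball (0 : ℝ) r → |y| < r := fun y hy => by simpa using hy
  have key : HasDerivAt (fun y => ∑' k : ℕ, y ^ (k + 1) / ((k : ℝ) + 1) ^ (s + 1))
      (∑' k : ℕ, x ^ k / ((k : ℝ) + 1) ^ s) x := by
    refine hasDerivAt_tsum_of_isPreconnected (u := fun k : ℕ => r ^ k)
      (g := fun k y => y ^ (k + 1) / ((k : ℝ) + 1) ^ (s + 1))
      (g' := fun k y => y ^ k / ((k : ℝ) + 1) ^ s) (t := Metric.ball (0 : ℝ) r) (y₀ := 0)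
      (summable_geometric_of_lt_one hr0.le hr) Metric.isOpen_ball
      (convex_ball 0 r).isPreconnected ?_ ?_ (by simpa using hr0) ?_ (by simpa using hxr)
    · intro k y _
      have hk : (k : ℝ) + 1 ≠ 0 := by positivity
      have h := (hasDerivAt_pow (k + 1) y).div_const (((k : ℝ) + 1) ^ (s + 1))
      refine h.congr_deriv ?_
      push_cast [Nat.add_sub_cancel]
      field_simp
      ring
    · intro k y hy
      have h1 : (1 : ℝ) ≤ ((k : ℝ) + 1) ^ s := one_le_pow₀ (by simp)
      rw [Real.norm_eq_abs, abs_div, abs_pow, abs_of_pos (by positivity : 0 < ((k : ℝ) + 1) ^ s)]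
      exact (div_le_self (by positivity) h1).trans
        (pow_le_pow_left₀ (abs_nonneg y) (hball y hy).le k)
    · simp
  have hdiv : Li s x / x = ∑' k : ℕ, x ^ k / ((k : ℝ) + 1) ^ s := by
    rw [Li, ← tsum_div_const]
    refine tsum_congr fun k => ?_
    field_simp
    ring
  rw [hdiv]
  exact key

theorem Li_one {x : ℝ} (hx : |x| < 1) : Li 1 x = -Real.log (1 - x) := by
  simpa [Li] using (Real.hasSum_pow_div_log_of_abs_lt_one hx).tsum_eq

theorem hasDerivAt_Li_two {x : ℝ} (hx : |x| < 1) (hx0 : x ≠ 0) :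
    HasDerivAt (Li 2) (-Real.log (1 - x) / x) x := by
  rw [← Li_one hx]
  exact hasDerivAt_Li_succ 1 hx hx0

theorem Li_two_zero : Li 2 0 = 0 := by simp [Li]

theorem Li_two_one : Li 2 1 = π ^ 2 / 6 := by
  have h := hasSum_zeta_two
  rw [← hasSum_nat_add_iff' 1] at h
  simpa [Li] using h.tsum_eq

theorem continuousOn_Li_two : ContinuousOn (Li 2) (Set.Icc 0 1) := by
  refine continuousOn_tsum (u := fun k : ℕ => 1 / ((k : ℝ) + 1) ^ 2)
    (fun k => by fun_prop) ?_ ?_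
  · exact_mod_cast (summable_nat_add_iff 1).2 (Real.summable_one_div_nat_pow.2 one_lt_two)
  · intro k x hx
    rw [Real.norm_of_nonneg (div_nonneg (pow_nonneg hx.1 _) (by positivity))]
    gcongr
    exact pow_le_one₀ hx.1 hx.2

open Filter Topology in
theorem tendsto_log_mul_log_one_sub_nhdsGT_zero :
    Tendsto (fun x : ℝ => Real.log x * Real.log (1 - x)) (𝓝[>] 0) (𝓝 0) := by
  have hd : HasDerivAt (fun x : ℝ => Real.log (1 - x)) (-1) 0 := by
    simpa using ((hasDerivAt_id (0 : ℝ)).const_sub 1).log (by simp)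
  have hs := hd.tendsto_slope.mono_left
    (nhdsWithin_mono 0 (s := Set.Ioi 0) fun _ hx => ne_of_gt hx)
  have hm := (tendsto_log_mul_rpow_nhdsGT_zero one_pos).mul hs
  rw [zero_mul] at hm
  refine hm.congr' ?_
  filter_upwards [self_mem_nhdsWithin] with x hx
  have hx0 : x ≠ 0 := ne_of_gt hx
  simp only [slope_def_field, sub_zero, Real.log_one, Real.rpow_one]
  field_simp

open Filter Topology Set in
/-- Euler's reflection formula for the dilogarithm. -/
theorem Li_two_add_Li_two_one_sub {x : ℝ} (h0 : 0 < x) (h1 : x < 1) :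
    Li 2 x + Li 2 (1 - x) = π ^ 2 / 6 - Real.log x * Real.log (1 - x) := by
  set F : ℝ → ℝ := fun y => Li 2 y + Li 2 (1 - y) + Real.log y * Real.log (1 - y) with hF
  have hderiv : ∀ y ∈ Ioo (0 : ℝ) 1, HasDerivAt F 0 y := by
    rintro y ⟨hy0, hy1⟩
    have hy1' : 1 - y ≠ 0 := by linarith
    have hsub : HasDerivAt (fun y : ℝ => 1 - y) (-1) y := (hasDerivAt_id y).const_sub 1
    have ha := hasDerivAt_Li_two (x := y) (by rw [abs_lt]; constructor <;> linarith) hy0.ne'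
    have hb := (hasDerivAt_Li_two (x := 1 - y)
      (by rw [abs_lt]; constructor <;> linarith) hy1').comp y hsub
    have hc := (Real.hasDerivAt_log hy0.ne').mul (hsub.log hy1')
    refine ((ha.add hb).add hc).congr_deriv ?_
    rw [sub_sub_cancel]
    field_simp
    ring
  have hconst : ∀ y ∈ Ioo (0 : ℝ) 1, F y = F x := fun y hy =>
    isOpen_Ioo.is_const_of_deriv_eq_zero isPreconnected_Ioo
      (fun w hw => (hderiv w hw).differentiableAt.differentiableWithinAt)
      (fun w hw => (hderiv w hw).deriv) hy ⟨h0, h1⟩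
  have hIoo : 𝓝[Ioo (0 : ℝ) 1] 0 = 𝓝[>] 0 := nhdsWithin_Ioo_eq_nhdsGT one_pos
  have hlimF : Tendsto F (𝓝[>] 0) (𝓝 (π ^ 2 / 6)) := by
    have ha : Tendsto (Li 2) (𝓝[>] 0) (𝓝 0) := by
      have h := (continuousOn_Li_two 0 (by simp)).mono Ioo_subset_Icc_self
      rwa [ContinuousWithinAt, hIoo, Li_two_zero] at h
    have hb : Tendsto (fun y => Li 2 (1 - y)) (𝓝[>] 0) (𝓝 (π ^ 2 / 6)) := by
      have hcont : ContinuousOn (fun y : ℝ => Li 2 (1 - y)) (Icc 0 1) :=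
        continuousOn_Li_two.comp (by fun_prop)
          (fun y hy => ⟨sub_nonneg.2 hy.2, sub_le_self 1 hy.1⟩)
      have h := (hcont 0 (by simp)).mono Ioo_subset_Icc_self
      rw [ContinuousWithinAt, hIoo, sub_zero, Li_two_one] at h
      exact h
    simpa using (ha.add hb).add tendsto_log_mul_log_one_sub_nhdsGT_zero
  have hFx : F x = π ^ 2 / 6 := by
    refine tendsto_nhds_unique (tendsto_const_nhds.congr' ?_) hlimF
    rw [← hIoo]
    filter_upwards [self_mem_nhdsWithin] with y hy using (hconst y hy).symm
  simp only [hF] at hFx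
  linarith

/-- The first derivative of `P₃`, simplified by the reflection formula. -/
theorem hasDerivAt_P_three {z : ℝ} (h1 : -1 < z) (h2 : z < 1) :
    HasDerivAt (fun z : ℝ =>
        12 * Li 3 ((1 + z) / 2) - 6 * Real.log ((1 + z) / 2) * Li 2 ((1 + z) / 2)
          - π ^ 2 * Real.log ((1 + z) / 2) - 12 * zeta3)
      (-6 * Li 2 ((1 - z) / 2) / (1 + z)) z := by
  have hx0 : 0 < (1 + z) / 2 := by linarith
  have hx1 : (1 + z) / 2 < 1 := by linarith
  have habs : |(1 + z) / 2| < 1 := by rw [abs_lt]; constructor <;> linarith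
  have hlin : HasDerivAt (fun z : ℝ => (1 + z) / 2) (1 / 2) z :=
    ((hasDerivAt_id z).const_add 1).div_const 2
  have h3 := (hasDerivAt_Li_succ 2 habs hx0.ne').comp z hlin
  have hLi2 := (hasDerivAt_Li_two habs hx0.ne').comp z hlin
  have hlog := hlin.log hx0.ne'
  refine ((((h3.const_mul 12).sub ((hlog.const_mul 6).mul hLi2)).sub
    (hlog.const_mul (π ^ 2))).sub_const (12 * zeta3)).congr_deriv ?_
  have hrefl := Li_two_add_Li_two_one_sub hx0 hx1
  have hone : 1 - (1 + z) / 2 = (1 - z) / 2 := by ring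
  rw [hone] at hrefl ⊢
  have hz : 1 + z ≠ 0 := by linarith
  rw [Function.comp_apply]
  field_simp
  linear_combination 6 * hrefl

theorem stmt_5 (z : ℝ) (h1 : -1 < z) (h2 : z < 1) :
    HasDerivAt (fun z : ℝ => (1 - z ^ 2) * deriv (fun z : ℝ =>
        12 * Li 3 ((1 + z) / 2) - 6 * Real.log ((1 + z) / 2) * Li 2 ((1 + z) / 2)
          - π ^ 2 * Real.log ((1 + z) / 2) - 12 * zeta3) z)
      (6 * Li 2 ((1 - z) / 2) - 6 * Real.log ((1 + z) / 2)) z := by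
  have hlin : HasDerivAt (fun z : ℝ => (1 - z) / 2) (-1 / 2) z :=
    ((hasDerivAt_id z).const_sub 1).div_const 2
  have hLi2 := (hasDerivAt_Li_two (x := (1 - z) / 2)
    (by rw [abs_lt]; constructor <;> linarith) (by linarith)).comp z hlin
  have hmain : HasDerivAt (fun z : ℝ => -6 * (1 - z) * Li 2 ((1 - z) / 2))
      (6 * Li 2 ((1 - z) / 2) - 6 * Real.log ((1 + z) / 2)) z := by
    refine ((((hasDerivAt_id z).const_sub 1).const_mul (-6)).mul hLi2).congr_deriv ?_
    have hone : 1 - (1 - z) / 2 = (1 + z) / 2 := by ring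
    have hz : 1 - z ≠ 0 := by linarith
    rw [hone, Function.comp_apply, id]
    field_simp
    ring
  refine hmain.congr_of_eventuallyEq ?_
  filter_upwards [Ioo_mem_nhds h1 h2] with w hw
  have hw0 : 1 + w ≠ 0 := by linarith [hw.1]
  rw [(hasDerivAt_P_three hw.1 hw.2).deriv]
  field_simp
  ring
end

section
/- The double series ∑_{k=1}^∞ (1/k²)·(∑_{j=k}^∞ 1/j²) converges and equals 7π⁴/360; equivalently, ∑_{k=1}^∞ Ψ′(k)/k² = 7π⁴/360, where Ψ′(k) = ∑_{j=0}^∞ 1/(k+j)² is the trigamma function at k. -/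
open Real

/-- For a nonnegative summable sequence, the sum of `f k * f j` over `k ≤ j` is half of
`(∑ f) ^ 2 + ∑ f ^ 2`. -/
theorem hasSum_mul_tsum_tail {f : ℕ → ℝ} {a b : ℝ} (hf0 : ∀ n, 0 ≤ f n) (hf : HasSum f a)
    (hf2 : HasSum (fun n => f n ^ 2) b) :
    HasSum (fun k => f k * ∑' j, f (j + k)) ((a ^ 2 + b) / 2) := by
  set T : ℕ → ℝ := fun k => ∑' j, f (j + k) with hT
  have T_zero : T 0 = a := by simpa [hT] using hf.tsum_eq
  have T_succ (k : ℕ) : T k = f k + T (k + 1) := by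
    have h := ((summable_nat_add_iff k).2 hf.summable).tsum_eq_zero_add
    simpa [hT, add_assoc, add_comm, add_left_comm] using h
  have partial_sum (n : ℕ) : ∑ k ∈ Finset.range n, f k * T k =
      (a ^ 2 - T n ^ 2 + ∑ k ∈ Finset.range n, f k ^ 2) / 2 := by
    induction n with
    | zero => simp [T_zero]
    | succ n ih =>
      rw [Finset.sum_range_succ, Finset.sum_range_succ, ih, T_succ n]
      ring
  rw [hasSum_iff_tendsto_nat_of_nonneg
    fun k => mul_nonneg (hf0 k) (tsum_nonneg fun j => hf0 (j + k))]
  have hlim := (((tendsto_sum_nat_add f).pow 2).const_sub (a ^ 2)).add hf2.tendsto_sum_nat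
  refine (Filter.tendsto_congr partial_sum).2 ?_
  simpa using hlim.div_const 2

theorem stmt_15 :
    Summable (fun k : ℕ =>
      (1 / ((k : ℝ) + 1) ^ 2) * ∑' j : ℕ, 1 / (((k : ℝ) + 1) + j) ^ 2) ∧
    ∑' k : ℕ, (1 / ((k : ℝ) + 1) ^ 2) * ∑' j : ℕ, 1 / (((k : ℝ) + 1) + j) ^ 2
      = 7 * π ^ 4 / 360 := by
  have h2 : HasSum (fun n : ℕ => 1 / ((n : ℝ) + 1) ^ 2) (π ^ 2 / 6) := by
    simpa using (hasSum_nat_add_iff' 1).2 hasSum_zeta_two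
  have h4 : HasSum (fun n : ℕ => (1 / ((n : ℝ) + 1) ^ 2) ^ 2) (π ^ 4 / 90) := by
    simpa [← pow_mul] using (hasSum_nat_add_iff' 1).2 hasSum_zeta_four
  have key : HasSum (fun k : ℕ =>
      (1 / ((k : ℝ) + 1) ^ 2) * ∑' j : ℕ, 1 / (((k : ℝ) + 1) + j) ^ 2)
      (7 * π ^ 4 / 360) := by
    convert hasSum_mul_tsum_tail (fun n => by positivity) h2 h4 using 1
    · ext k
      congr 2
      ext j
      push_cast
      ring_nf
    · ring
  exact ⟨key.summable, key.tsum_eq⟩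
end
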